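/- For positive integers b, c and d, the symmetrical antitree AT(1,b,c,d,c,b,1) (which has diameter 6) is Bonnet-Myers sharp if and only if c=2b+3 and d=3b+1. -/

import Mathlib

open scoped Classical
open Finset

noncomputable section

/-- The degree of a vertex `x` in the graph `G`. -/
def deg {V : Type*} [Fintype V] (G : SimpleGraph V) (x : V) : ℕ :=
  (Finset.univ.filter (fun y => G.Adj x y)).card

/-- The diameter of `G`: the maximum of the combinatorial distance over all pairs of vertices. -/
def diam {V : Type*} [Fintype V] (G : SimpleGraph V) : ℕ :=
  Finset.univ.sup (fun xy : V × V => G.dist xy.1 xy.2)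

/-- The probability measure `μ_x^p` of the lazy simple random walk at `x` with idleness `p`. -/
def mu {V : Type*} [Fintype V] (G : SimpleGraph V) (p : ℝ) (x : V) : V → ℝ :=
  fun z => if z = x then p else if G.Adj x z then (1 - p) / (deg G x : ℝ) else 0

/-- The Wasserstein distance `W₁(μ₁, μ₂)` with respect to the combinatorial distance of `G`:
the infimum of the total transport cost over all transport plans from `μ₁` to `μ₂`. -/
def W1 {V : Type*} [Fintype V] (G : SimpleGraph V) (μ₁ μ₂ : V → ℝ) : ℝ :=
  sInf {c : ℝ | ∃ π : V → V → ℝ,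
    (∀ x y, 0 ≤ π x y ∧ π x y ≤ 1) ∧
    (∀ x, ∑ y, π x y = μ₁ x) ∧
    (∀ y, ∑ x, π x y = μ₂ y) ∧
    c = ∑ x, ∑ y, (G.dist x y : ℝ) * π x y}

/-- The `p`-Ollivier-Ricci curvature `κ_p(x,y) = 1 - W₁(μ_x^p, μ_y^p)`. -/
def kappa {V : Type*} [Fintype V] (G : SimpleGraph V) (p : ℝ) (x y : V) : ℝ :=
  1 - W1 G (mu G p x) (mu G p y)

/-- The Lin-Lu-Yau curvature `κ_LLY(x,y) = lim_{p→1} κ_p(x,y)/(1-p)`. -/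
def kappaLLY {V : Type*} [Fintype V] (G : SimpleGraph V) (x y : V) : ℝ :=
  Filter.limUnder (nhdsWithin 1 (Set.Iio 1)) (fun p => kappa G p x y / (1 - p))

/-- `G` is Bonnet-Myers sharp if the infimum of `κ_LLY` over the edges equals `2/diam(G)`. -/
def BMSharp {V : Type*} [Fintype V] (G : SimpleGraph V) : Prop :=
  sInf {r : ℝ | ∃ x y, G.Adj x y ∧ r = kappaLLY G x y} = 2 / (diam G : ℝ)

/-- `G` is obtained from the complete graph on its vertex set by deleting a matching
(a set of pairwise disjoint edges, encoded as a symmetric irreflexive relation in which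
every vertex has at most one partner). -/
def IsMatchingDeletionOfComplete {V : Type*} (G : SimpleGraph V) : Prop :=
  ∃ M : V → V → Prop, Symmetric M ∧ (∀ x, ¬ M x x) ∧
    (∀ x y z, M x y → M x z → y = z) ∧
    (∀ x y, G.Adj x y ↔ x ≠ y ∧ ¬ M x y)

/-- The graph `G(a,b)` on `2a+b` vertices `u_1, …, u_{2a}, v_1, …, v_b` (encoded as
`Fin (2a+b)`, with `u_i` the index `i-1` and `v_j` the index `2a+j-1`), in which two distinct
vertices are adjacent unless they form a pair `{u_{2i-1}, u_{2i}}`, i.e. `G(a,b)` is the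
complete graph `K_{2a+b}` with a matching of size `a` deleted. -/
def Gab (a b : ℕ) : SimpleGraph (Fin (2*a+b)) where
  Adj x y := x ≠ y ∧ ¬((x : ℕ) < 2*a ∧ (y : ℕ) < 2*a ∧ (x : ℕ)/2 = (y : ℕ)/2)
  symm := by
    constructor
    intro x y h
    exact ⟨h.1.symm, fun hc => h.2 ⟨hc.2.1, hc.1, hc.2.2.symm⟩⟩
  loopless := by constructor; intro x h; exact h.1 rfl

/-- The antitree `AT(a_1, …, a_N)` on the disjoint union of sets `V_1, …, V_N` with
`|V_k| = a_k` (0-indexed here: `V_k` is `Fin (a k)` for `k : Fin N`): two distinct vertices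
are adjacent iff they lie in the same set or in consecutive sets. -/
def antitree (N : ℕ) (a : Fin N → ℕ) : SimpleGraph (Σ k : Fin N, Fin (a k)) where
  Adj x y := x ≠ y ∧
    ((x.1 : ℕ) = (y.1 : ℕ) ∨ (x.1 : ℕ) + 1 = (y.1 : ℕ) ∨ (y.1 : ℕ) + 1 = (x.1 : ℕ))
  symm := by
    constructor
    intro x y h
    refine ⟨h.1.symm, ?_⟩
    rcases h.2 with h2 | h2 | h2
    · exact Or.inl h2.symm
    · exact Or.inr (Or.inr h2)
    · exact Or.inr (Or.inl h2)
  loopless := by constructor; intro x h; exact h.1 rfl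


section helpers
variable {V : Type*} [Fintype V]

lemma W1_bddBelow (G : SimpleGraph V) (μ₁ μ₂ : V → ℝ) : BddBelow {c : ℝ | ∃ π : V → V → ℝ,
    (∀ x y, 0 ≤ π x y ∧ π x y ≤ 1) ∧
    (∀ x, ∑ y, π x y = μ₁ x) ∧
    (∀ y, ∑ x, π x y = μ₂ y) ∧
    c = ∑ x, ∑ y, (G.dist x y : ℝ) * π x y} := by
  refine ⟨0, ?_⟩
  rintro c ⟨π, h1, -, -, rfl⟩
  exact Finset.sum_nonneg fun x _ => Finset.sum_nonneg fun y _ =>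
    mul_nonneg (Nat.cast_nonneg _) (h1 x y).1

lemma W1_le (G : SimpleGraph V) (μ₁ μ₂ : V → ℝ) (π : V → V → ℝ)
    (h0 : ∀ x y, 0 ≤ π x y) (hm : ∀ x, μ₁ x ≤ 1)
    (h1 : ∀ x, ∑ y, π x y = μ₁ x) (h2 : ∀ y, ∑ x, π x y = μ₂ y) :
    W1 G μ₁ μ₂ ≤ ∑ x, ∑ y, (G.dist x y : ℝ) * π x y := by
  refine csInf_le (W1_bddBelow G μ₁ μ₂) ⟨π, fun x y => ⟨h0 x y, ?_⟩, h1, h2, rfl⟩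
  calc π x y ≤ ∑ y, π x y := Finset.single_le_sum (fun y _ => h0 x y) (Finset.mem_univ y)
    _ ≤ 1 := by rw [h1]; exact hm x

lemma le_W1 (G : SimpleGraph V) (μ₁ μ₂ : V → ℝ) (h01 : ∀ x, 0 ≤ μ₁ x) (h02 : ∀ x, 0 ≤ μ₂ x)
    (hs1 : ∑ x, μ₁ x = 1) (hs2 : ∑ x, μ₂ x = 1) (B : ℝ)
    (h : ∀ π : V → V → ℝ, (∀ x y, 0 ≤ π x y) → (∀ x, ∑ y, π x y = μ₁ x) →
      (∀ y, ∑ x, π x y = μ₂ y) → B ≤ ∑ x, ∑ y, (G.dist x y : ℝ) * π x y) :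
    B ≤ W1 G μ₁ μ₂ := by
  have l1 : ∀ x, μ₁ x ≤ 1 := fun x => by
    rw [← hs1]; exact Finset.single_le_sum (fun y _ => h01 y) (Finset.mem_univ x)
  have l2 : ∀ x, μ₂ x ≤ 1 := fun x => by
    rw [← hs2]; exact Finset.single_le_sum (fun y _ => h02 y) (Finset.mem_univ x)
  refine le_csInf ?_ ?_
  · refine ⟨_, fun x y => μ₁ x * μ₂ y, fun x y => ⟨mul_nonneg (h01 x) (h02 y),
      mul_le_one₀ (l1 x) (h02 y) (l2 y)⟩, ?_, ?_, rfl⟩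
    · intro x; rw [← Finset.mul_sum, hs2, mul_one]
    · intro x; rw [← Finset.sum_mul, hs1, one_mul]
  · rintro c ⟨π, h1, h2, h3, rfl⟩
    exact h π (fun x y => (h1 x y).1) h2 h3

lemma W1_symm (G : SimpleGraph V) (μ₁ μ₂ : V → ℝ) : W1 G μ₁ μ₂ = W1 G μ₂ μ₁ := by
  unfold W1
  congr 1
  ext c
  constructor <;>
  · rintro ⟨π, h1, h2, h3, rfl⟩
    refine ⟨fun x y => π y x, fun x y => h1 y x, h3, h2, ?_⟩
    rw [Finset.sum_comm]
    simp only [G.dist_comm]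

lemma kappaLLY_symm (G : SimpleGraph V) (x y : V) : kappaLLY G x y = kappaLLY G y x := by
  unfold kappaLLY kappa
  simp only [W1_symm G (mu G _ x)]

lemma deg_pos {G : SimpleGraph V} {x y : V} (h : G.Adj x y) : 0 < deg G x :=
  Finset.card_pos.2 ⟨y, by simp [h]⟩

lemma mu_eq (G : SimpleGraph V) (p : ℝ) (x z : V) : mu G p x z =
    (if z = x then p else 0) + (if G.Adj x z then (1 - p) / (deg G x : ℝ) else 0) := by
  unfold mu
  by_cases h : z = x
  · subst h; simp
  · simp [h]

lemma mu_nonneg (G : SimpleGraph V) (p : ℝ) (h0 : 0 ≤ p) (h1 : p ≤ 1) (x z : V) :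
    0 ≤ mu G p x z := by
  unfold mu
  have : 0 ≤ 1 - p := by linarith
  split_ifs <;> positivity

lemma mu_sum {G : SimpleGraph V} (p : ℝ) {x : V} (h : 0 < deg G x) :
    ∑ z, mu G p x z = 1 := by
  simp only [mu_eq, Finset.sum_add_distrib]
  have h' : (deg G x : ℝ) ≠ 0 := by positivity
  rw [← Finset.sum_filter (fun z => G.Adj x z)]
  simp only [Finset.sum_const, nsmul_eq_mul]
  change _ + (deg G x : ℝ) * _ = 1
  simp
  field_simp
  ring

lemma mu_le_one {G : SimpleGraph V} (p : ℝ) (h0 : 0 ≤ p) (h1 : p ≤ 1) {x : V}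
    (h : 0 < deg G x) (z : V) : mu G p x z ≤ 1 := by
  rw [← mu_sum p h]
  exact Finset.single_le_sum (fun y _ => mu_nonneg G p h0 h1 x y) (Finset.mem_univ z)

/-- easy Kantorovich duality -/
lemma W1_ge_lip {G : SimpleGraph V} {x y : V} (h : G.Adj x y) (p : ℝ) (h0 : 0 ≤ p) (h1 : p ≤ 1)
    (f : V → ℝ) (hf : ∀ u v, f v - f u ≤ G.dist u v) :
    ∑ z, mu G p y z * f z - ∑ z, mu G p x z * f z ≤ W1 G (mu G p x) (mu G p y) := by
  refine le_W1 G _ _ (mu_nonneg G p h0 h1 x) (mu_nonneg G p h0 h1 y) (mu_sum p (deg_pos h))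
    (mu_sum p (deg_pos h.symm)) _ ?_
  intro π hπ hx hy
  have e1 : ∑ z, mu G p y z * f z = ∑ u, ∑ v, π u v * f v := by
    rw [Finset.sum_comm]
    simp only [← Finset.sum_mul, hy]
  have e2 : ∑ z, mu G p x z * f z = ∑ u, ∑ v, π u v * f u := by
    simp only [← Finset.sum_mul, hx]
  rw [e1, e2, ← Finset.sum_sub_distrib]
  refine Finset.sum_le_sum fun u _ => ?_
  rw [← Finset.sum_sub_distrib]
  refine Finset.sum_le_sum fun v _ => ?_
  nlinarith [hf u v, hπ u v]

lemma kappa_le_two {G : SimpleGraph V} (hG : G.Connected) {x y : V} (h : G.Adj x y) (p : ℝ)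
    (h0 : 0 ≤ p) (h1 : p ≤ 1) : kappa G p x y ≤ 2 * (1 - p) := by
  have hf : ∀ u v, (G.dist x v : ℝ) - G.dist x u ≤ G.dist u v := by
    intro u v
    have := hG.dist_triangle (u := x) (v := u) (w := v)
    have : (G.dist x v : ℝ) ≤ G.dist x u + G.dist u v := by exact_mod_cast this
    linarith
  have := W1_ge_lip h p h0 h1 (fun v => (G.dist x v : ℝ)) hf
  have a1 : p ≤ ∑ z, mu G p y z * (G.dist x z : ℝ) := by
    calc p = mu G p y y * (G.dist x y : ℝ) := by
          rw [SimpleGraph.dist_eq_one_iff_adj.2 h]; simp [mu]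
      _ ≤ _ := Finset.single_le_sum (f := fun z => mu G p y z * (G.dist x z : ℝ))
          (fun z _ => mul_nonneg (mu_nonneg G p h0 h1 y z) (Nat.cast_nonneg _)) (Finset.mem_univ y)
  have a2 : ∑ z, mu G p x z * (G.dist x z : ℝ) ≤ 1 - p := by
    have : ∑ z, (mu G p x z - if z = x then p else 0) = 1 - p := by
      rw [Finset.sum_sub_distrib, mu_sum p (deg_pos h)]; simp
    rw [← this]
    refine Finset.sum_le_sum fun z _ => ?_
    by_cases hz : z = x
    · subst hz; simp [mu]
    · by_cases ha : G.Adj x z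
      · rw [SimpleGraph.dist_eq_one_iff_adj.2 ha]; simp [hz]
      · simp [mu, hz, ha]
  unfold kappa
  linarith

lemma kappa_mono {G : SimpleGraph V} {x y : V} (h : G.Adj x y) (p q : ℝ)
    (h0 : 0 ≤ p) (hpq : p ≤ q) (hq : q < 1) :
    kappa G p x y / (1 - p) ≤ kappa G q x y / (1 - q) := by
  have hp1 : 0 < 1 - p := by linarith
  have hq1 : 0 < 1 - q := by linarith
  set t := (1 - q) / (1 - p) with ht
  have ht0 : 0 < t := by positivity
  have ht1 : t ≤ 1 := by rw [ht, div_le_one hp1]; linarith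
  have htm : t * (1 - p) = 1 - q := by rw [ht]; field_simp
  have hmu : ∀ w z, mu G q w z = t * mu G p w z + (1 - t) * (if z = w then 1 else 0) := by
    intro w z
    simp only [mu_eq]
    have : (1 - q) / (deg G w : ℝ) = t * ((1 - p) / (deg G w : ℝ)) := by rw [← htm]; ring
    rw [this]
    by_cases hz : z = w
    · subst hz; simp; linarith
    · simp [hz]
  have key : (W1 G (mu G q x) (mu G q y) - (1 - t)) / t ≤ W1 G (mu G p x) (mu G p y) := by
    refine le_W1 G _ _ (mu_nonneg G p h0 (by linarith) x) (mu_nonneg G p h0 (by linarith) y)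
      (mu_sum p (deg_pos h)) (mu_sum p (deg_pos h.symm)) _ ?_
    intro π hπ hx hy
    rw [div_le_iff₀ ht0]
    have := W1_le G (mu G q x) (mu G q y)
      (fun u v => t * π u v + (1 - t) * ((if u = x then 1 else 0) * (if v = y then 1 else 0)))
      (by
        intro u v
        have := hπ u v
        have : 0 ≤ 1 - t := by linarith
        positivity)
      (mu_le_one q (by linarith) (by linarith) (deg_pos h))
      (by
        intro u
        rw [Finset.sum_add_distrib, ← Finset.mul_sum, hx, ← Finset.mul_sum, ← Finset.mul_sum, hmu]
        simp)
      (by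
        intro u
        rw [Finset.sum_add_distrib, ← Finset.mul_sum, hy, ← Finset.mul_sum, ← Finset.sum_mul, hmu]
        simp)
    have e : ∑ u, ∑ v, (G.dist u v : ℝ) *
        (t * π u v + (1 - t) * ((if u = x then 1 else 0) * (if v = y then 1 else 0)))
        = t * ∑ u, ∑ v, (G.dist u v : ℝ) * π u v + (1 - t) := by
      have : ∀ u v, (G.dist u v : ℝ) *
        (t * π u v + (1 - t) * ((if u = x then 1 else 0) * (if v = y then 1 else 0)))
        = t * ((G.dist u v : ℝ) * π u v) +
          (if u = x then (if v = y then (1 - t) * (G.dist u v : ℝ) else 0) else 0) := by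
        intro u v; split_ifs <;> ring
      simp only [this, Finset.sum_add_distrib, ← Finset.mul_sum]
      congr 1
      rw [Finset.sum_eq_single x]
      · simp [SimpleGraph.dist_eq_one_iff_adj.2 h]
      · intro u _ hu; simp [hu]
      · simp
    rw [e] at this
    linarith
  rw [div_le_iff₀ ht0] at key
  rw [div_le_div_iff₀ hp1 hq1]
  unfold kappa
  rw [← htm]
  nlinarith

lemma kappa_tendsto {G : SimpleGraph V} (hG : G.Connected) {x y : V} (h : G.Adj x y) :
    Filter.Tendsto (fun p => kappa G p x y / (1 - p)) (nhdsWithin 1 (Set.Iio 1))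
      (nhds (kappaLLY G x y)) := by
  have hm : MonotoneOn (fun p => kappa G p x y / (1 - p)) (Set.Ioo 0 1) := by
    intro p hp q hq hpq
    exact kappa_mono h p q hp.1.le hpq hq.2
  have hb : BddAbove ((fun p => kappa G p x y / (1 - p)) '' (Set.Ioo 0 1)) := by
    refine ⟨2, ?_⟩
    rintro _ ⟨p, hp, rfl⟩
    have : 0 < 1 - p := by linarith [hp.2]
    simp only
    rw [div_le_iff₀ this]
    exact kappa_le_two hG h p hp.1.le hp.2.le
  have := hm.tendsto_nhdsWithin_Ioo_left (by norm_num) hb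
  exact tendsto_nhds_limUnder ⟨_, this⟩

lemma eventually_half : ∀ᶠ p : ℝ in nhdsWithin 1 (Set.Iio 1), 1/2 ≤ p ∧ p < 1 := by
  filter_upwards [Ioo_mem_nhdsLT (by norm_num : (1/2:ℝ) < 1)] with p hp
  exact ⟨hp.1.le, hp.2⟩

lemma kappaLLY_ge {G : SimpleGraph V} (hG : G.Connected) {x y : V} (h : G.Adj x y) (m : ℝ)
    (hm : ∀ p, 1/2 ≤ p → p < 1 → m * (1 - p) ≤ kappa G p x y) : m ≤ kappaLLY G x y := by
  refine ge_of_tendsto (kappa_tendsto hG h) ?_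
  filter_upwards [eventually_half] with p hp
  rw [le_div_iff₀ (by linarith [hp.2])]
  exact hm p hp.1 hp.2

lemma kappaLLY_le {G : SimpleGraph V} (hG : G.Connected) {x y : V} (h : G.Adj x y) (m : ℝ)
    (hm : ∀ p, 1/2 ≤ p → p < 1 → kappa G p x y ≤ m * (1 - p)) : kappaLLY G x y ≤ m := by
  refine le_of_tendsto (kappa_tendsto hG h) ?_
  filter_upwards [eventually_half] with p hp
  rw [div_le_iff₀ (by linarith [hp.2])]
  exact hm p hp.1 hp.2

lemma plan_exists (G : SimpleGraph V) (μ ν f : V → ℝ) (hμ : ∀ u, 0 ≤ μ u) (hν : ∀ u, 0 ≤ ν u)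
    (hs : ∑ u, μ u = ∑ u, ν u)
    (hd : ∀ u v, ν u < μ u → μ v < ν v → (G.dist u v : ℝ) = f v - f u) :
    ∃ π : V → V → ℝ, (∀ u v, 0 ≤ π u v) ∧ (∀ u, ∑ v, π u v = μ u) ∧ (∀ v, ∑ u, π u v = ν v) ∧
      ∑ u, ∑ v, (G.dist u v : ℝ) * π u v = ∑ z, ν z * f z - ∑ z, μ z * f z := by
  set P : V → ℝ := fun u => max (μ u - ν u) 0 with hP
  set Q : V → ℝ := fun u => max (ν u - μ u) 0 with hQ
  have hPQ : ∀ u, P u - Q u = μ u - ν u := by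
    intro u; simp only [hP, hQ]
    rcases le_total (μ u) (ν u) with h | h
    · rw [max_eq_right (by linarith), max_eq_left (by linarith)]; ring
    · rw [max_eq_left (by linarith), max_eq_right (by linarith)]; ring
  have hP0 : ∀ u, 0 ≤ P u := fun u => le_max_right _ _
  have hQ0 : ∀ u, 0 ≤ Q u := fun u => le_max_right _ _
  have hsPQ : ∑ u, Q u = ∑ u, P u := by
    have : ∑ u, (P u - Q u) = 0 := by
      simp only [hPQ, Finset.sum_sub_distrib]; linarith
    rw [Finset.sum_sub_distrib] at this; linarith
  set M := ∑ u, P u with hM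
  have hM0 : 0 ≤ M := Finset.sum_nonneg fun u _ => hP0 u
  have hPM : ∀ u, P u * M / M = P u := by
    intro u
    by_cases h : M = 0
    · have : P u = 0 := by
        have := (Finset.sum_eq_zero_iff_of_nonneg (fun u _ => hP0 u)).1 h u (Finset.mem_univ u)
        exact this
      simp [this]
    · field_simp
  have hQM : ∀ u, M * Q u / M = Q u := by
    intro u
    by_cases h : M = 0
    · have : Q u = 0 := by
        have := (Finset.sum_eq_zero_iff_of_nonneg (fun u _ => hQ0 u)).1 (hsPQ.trans h) u (Finset.mem_univ u)
        exact this
      simp [this]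
    · field_simp
  have s1 : ∀ u, ∑ v, P u * Q v / M = P u := by
    intro u; rw [← Finset.sum_div, ← Finset.mul_sum, hsPQ, hPM]
  have s2 : ∀ v, ∑ u, P u * Q v / M = Q v := by
    intro u; rw [← Finset.sum_div, ← Finset.sum_mul, hQM]
  have hmin : ∀ u, μ u - P u = ν u - Q u := fun u => by linarith [hPQ u]
  have hmin0 : ∀ u, 0 ≤ μ u - P u := by
    intro u
    simp only [hP]
    rcases le_total (μ u) (ν u) with h | h
    · rw [max_eq_right (by linarith)]; linarith [hμ u]
    · rw [max_eq_left (by linarith)]; linarith [hν u]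
  refine ⟨fun u v => (if u = v then μ u - P u else 0) + P u * Q v / M, ?_, ?_, ?_, ?_⟩
  · intro u v
    have h1 : 0 ≤ (if u = v then μ u - P u else 0) := by
      split_ifs
      · exact hmin0 u
      · exact le_rfl
    have := hP0 u
    have := hQ0 v
    have : 0 ≤ P u * Q v / M := by positivity
    linarith
  · intro u
    rw [Finset.sum_add_distrib, s1]; simp
  · intro u
    rw [Finset.sum_add_distrib, s2]; simp [hmin]
  · have e : ∀ u v, (G.dist u v : ℝ) * ((if u = v then μ u - P u else 0) + P u * Q v / M)
      = P u * Q v / M * f v - P u * Q v / M * f u := by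
      intro u v
      have e0 : (G.dist u v : ℝ) * (if u = v then μ u - P u else 0) = 0 := by
        split_ifs with h
        · subst h; simp
        · simp
      rw [mul_add, e0, zero_add]
      by_cases h1 : ν u < μ u
      · by_cases h2 : μ v < ν v
        · rw [hd u v h1 h2]; ring
        · have : Q v = 0 := by simp only [hQ]; exact max_eq_right (by linarith)
          simp [this]
      · have : P u = 0 := by simp only [hP]; exact max_eq_right (by linarith)
        simp [this]
    simp only [e, Finset.sum_sub_distrib]
    rw [Finset.sum_comm]
    simp only [← Finset.sum_mul, s1, s2]
    rw [← Finset.sum_sub_distrib, ← Finset.sum_sub_distrib]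
    refine Finset.sum_congr rfl fun u _ => ?_
    have := hmin u
    linear_combination (f u) * this

lemma W1_upper {G : SimpleGraph V} {x y : V} (h : G.Adj x y) (p : ℝ) (h0 : 1/2 ≤ p) (h1 : p < 1)
    (f : V → ℝ) (hdeg : deg G x ≤ deg G y) (hxy : f y - f x = 1)
    (hd : ∀ u v, (u = x ∨ G.Adj x u) → G.Adj y v → v ≠ x → ¬ G.Adj x v →
      (G.dist u v : ℝ) = f v - f u) :
    W1 G (mu G p x) (mu G p y) ≤ ∑ z, mu G p y z * f z - ∑ z, mu G p x z * f z := by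
  have hne : x ≠ y := h.ne
  have hdx : (1:ℝ) ≤ deg G x := by exact_mod_cast deg_pos h
  have hdy : (1:ℝ) ≤ deg G y := by exact_mod_cast deg_pos h.symm
  have hle : (1 - p) / (deg G y : ℝ) ≤ (1 - p) / (deg G x : ℝ) := by
    have : (deg G x : ℝ) ≤ deg G y := by exact_mod_cast hdeg
    have : 0 ≤ 1 - p := by linarith
    gcongr
  have hxp : (1 - p) / (deg G x : ℝ) ≤ p := by
    rw [div_le_iff₀ (by linarith)]; nlinarith
  have hy0 : 0 ≤ (1 - p) / (deg G y : ℝ) := div_nonneg (by linarith) (by linarith)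
  set A := (1 - p) / (deg G x : ℝ) with hA
  set B := (1 - p) / (deg G y : ℝ) with hB
  have hmx : ∀ z, mu G p x z = if z = x then p else if G.Adj x z then A else 0 := fun z => rfl
  have hmy : ∀ z, mu G p y z = if z = y then p else if G.Adj y z then B else 0 := fun z => rfl
  obtain ⟨π, hπ0, hπ1, hπ2, hπ3⟩ := plan_exists G
    (fun z => mu G p x z - if z = x then p - A else 0)
    (fun z => mu G p y z - if z = y then p - A else 0) f
    (by
      intro u; simp only [hmx]; split_ifs <;> linarith)
    (by
      intro u; simp only [hmy]; split_ifs <;> linarith)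
    (by
      rw [Finset.sum_sub_distrib, Finset.sum_sub_distrib, mu_sum p (deg_pos h),
        mu_sum p (deg_pos h.symm)]
      simp)
    (by
      intro u v hu hv
      simp only [hmx, hmy] at hu hv
      apply hd
      · by_contra hcon
        push Not at hcon
        simp only [hcon.1, hcon.2, if_false] at hu
        split_ifs at hu <;> linarith
      · by_contra hcon
        simp only [hcon, if_false] at hv
        by_cases hvy : v = y
        · subst hvy; simp [h, hne.symm] at hv
        · simp only [hvy, if_false] at hv
          split_ifs at hv <;> linarith
      · rintro rfl
        simp [hne] at hv
        split_ifs at hv <;> linarith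
      · intro hcon
        simp only [hcon, hcon.ne', if_false, if_true] at hv
        split_ifs at hv <;> linarith)
  have := W1_le G (mu G p x) (mu G p y)
    (fun u v => π u v + (if u = x then (if v = y then p - A else 0) else 0))
    (by
      intro u v
      have := hπ0 u v
      split_ifs <;> linarith)
    (mu_le_one p (by linarith) h1.le (deg_pos h))
    (by
      intro u
      rw [Finset.sum_add_distrib, hπ1]
      by_cases hu : u = x <;> simp [hu])
    (by
      intro u
      rw [Finset.sum_add_distrib, hπ2]
      simp)
  refine this.trans (le_of_eq ?_)
  simp only [mul_add, Finset.sum_add_distrib, hπ3]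
  have e1 : ∑ u, ∑ v, (G.dist u v : ℝ) * (if u = x then (if v = y then p - A else 0) else 0)
      = p - A := by
    rw [Finset.sum_eq_single x]
    · simp [SimpleGraph.dist_eq_one_iff_adj.2 h]
    · intro u _ hu; simp [hu]
    · simp
  rw [e1]
  simp only [sub_mul, Finset.sum_sub_distrib, ite_mul, zero_mul]
  simp
  linear_combination (-(p - A)) * hxy

end helpers

section anti
variable {N : ℕ} {a : Fin N → ℕ}

/-- closeness of layers -/
def near (i j : ℕ) : Prop := i = j ∨ i + 1 = j ∨ j + 1 = i

lemma at_adj (x y : Σ k : Fin N, Fin (a k)) :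
    (antitree N a).Adj x y ↔ x ≠ y ∧ near x.1 y.1 := Iff.rfl

lemma walk_ge {x y : Σ k : Fin N, Fin (a k)} (w : (antitree N a).Walk x y) :
    (y.1 : ℕ) ≤ x.1 + w.length ∧ (x.1 : ℕ) ≤ y.1 + w.length := by
  induction w with
  | nil => simp
  | cons h w ih =>
    have h2 := h.2
    simp only [SimpleGraph.Walk.length_cons]
    omega

lemma walk_up (ha : ∀ k, 0 < a k) (n : ℕ) : ∀ x y : Σ k : Fin N, Fin (a k),
    (x.1 : ℕ) + (n + 1) = y.1 → ∃ w : (antitree N a).Walk x y, w.length = n + 1 := by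
  induction n with
  | zero =>
    intro x y h
    have : (antitree N a).Adj x y := ⟨by rintro rfl; omega, Or.inr (Or.inl (by omega))⟩
    exact ⟨this.toWalk, rfl⟩
  | succ n ih =>
    intro x y h
    have hy := y.1.2
    let z : Σ k : Fin N, Fin (a k) := ⟨⟨(x.1 : ℕ) + 1, by omega⟩, ⟨0, ha _⟩⟩
    have hz : (z.1 : ℕ) = x.1 + 1 := rfl
    obtain ⟨w, hw⟩ := ih z y (by omega)
    have : (antitree N a).Adj x z :=
      ⟨by intro hh; rw [← hh] at hz; omega, Or.inr (Or.inl (by omega))⟩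
    exact ⟨SimpleGraph.Walk.cons this w, by simp [hw]⟩

lemma at_reach (ha : ∀ k, 0 < a k) (x y : Σ k : Fin N, Fin (a k)) :
    (antitree N a).Reachable x y := by
  rcases lt_trichotomy (x.1 : ℕ) y.1 with h | h | h
  · obtain ⟨w, -⟩ := walk_up ha (y.1 - x.1 - 1) x y (by omega)
    exact ⟨w⟩
  · by_cases hxy : x = y
    · rw [hxy]
    · exact SimpleGraph.Adj.reachable ⟨hxy, Or.inl h⟩
  · obtain ⟨w, -⟩ := walk_up ha (x.1 - y.1 - 1) y x (by omega)
    exact SimpleGraph.Reachable.symm ⟨w⟩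

lemma dist_ge (ha : ∀ k, 0 < a k) (x y : Σ k : Fin N, Fin (a k)) :
    (y.1 : ℕ) ≤ x.1 + (antitree N a).dist x y ∧ (x.1 : ℕ) ≤ y.1 + (antitree N a).dist x y := by
  obtain ⟨w, hw⟩ := (at_reach ha x y).exists_walk_length_eq_dist
  rw [← hw]; exact walk_ge w

lemma dist_lt (ha : ∀ k, 0 < a k) (x y : Σ k : Fin N, Fin (a k)) (h : (x.1 : ℕ) < y.1) :
    (x.1 : ℕ) + (antitree N a).dist x y = y.1 := by
  obtain ⟨w, hw⟩ := walk_up ha (y.1 - x.1 - 1) x y (by omega)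
  have := SimpleGraph.dist_le w
  have := dist_ge ha x y
  omega

lemma at_sum (p : ℝ) (x : Σ k : Fin N, Fin (a k)) (F : Fin N → ℝ) :
    ∑ z, mu (antitree N a) p x z * F z.1 =
      (p - (1 - p) / (deg (antitree N a) x : ℝ)) * F x.1 + (1 - p) / (deg (antitree N a) x : ℝ) *
        ∑ j : Fin N, (if near x.1 j then (a j : ℝ) * F j else 0) := by
  set D := (1 - p) / (deg (antitree N a) x : ℝ) with hD
  have e : ∀ z, mu (antitree N a) p x z * F z.1 =
      (if z = x then (p - D) * F x.1 else 0) + (if near x.1 z.1 then D * F z.1 else 0) := by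
    intro z
    unfold mu
    simp only [at_adj, ← hD]
    by_cases hz : z = x
    · subst hz; simp [near]; ring
    · simp [hz, Ne.symm hz]
  simp only [e, Finset.sum_add_distrib]
  congr 1
  · simp
  · rw [Fintype.sum_sigma, Finset.mul_sum]
    refine Finset.sum_congr rfl fun j _ => ?_
    simp only [Finset.sum_const, Finset.card_univ, Fintype.card_fin, nsmul_eq_mul]
    split_ifs <;> ring

lemma at_deg (x : Σ k : Fin N, Fin (a k)) :
    (deg (antitree N a) x : ℝ) = ∑ j : Fin N, (if near x.1 j then (a j : ℝ) else 0) - 1 := by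
  unfold deg
  rw [Finset.card_filter]
  push_cast
  have e : ∀ z, (if (antitree N a).Adj x z then (1:ℝ) else 0) =
      (if near x.1 z.1 then 1 else 0) - (if z = x then 1 else 0) := by
    intro z
    simp only [at_adj]
    by_cases hz : z = x
    · subst hz; simp [near]
    · simp [hz, Ne.symm hz]
  simp only [e, Finset.sum_sub_distrib]
  congr 1
  · rw [Fintype.sum_sigma]
    refine Finset.sum_congr rfl fun j _ => ?_
    by_cases h : near (x.1 : ℕ) (j : ℕ)
    · simp only [h, if_true]; simp
    · simp only [h, if_false]; simp
  · simp

end anti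

section main
variable {b c d : ℕ}

/-- degrees by layer -/
def dg (b c d : ℕ) : ℕ → ℝ
  | 0 => b
  | 1 => b + c
  | 2 => b + c + d - 1
  | 3 => 2 * c + d - 1
  | 4 => b + c + d - 1
  | 5 => b + c
  | _ => b

/-- Laplacian of the layer function -/
def lpl (b c d : ℕ) : ℕ → ℝ
  | 0 => 1
  | 1 => (c - 1) / (b + c)
  | 2 => (d - b) / (b + c + d - 1)
  | 3 => 0
  | 4 => - ((d - b) / (b + c + d - 1))
  | 5 => - ((c - 1) / (b + c))
  | _ => - 1

lemma seven_pos (hb : 0 < b) (hc : 0 < c) (hd : 0 < d) :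
    ∀ k : Fin 7, 0 < (![1, b, c, d, c, b, 1] : Fin 7 → ℕ) k := by
  intro k
  fin_cases k <;> simp [hb, hc, hd]

lemma seven_deg (x : Σ k : Fin 7, Fin ((![1, b, c, d, c, b, 1] : Fin 7 → ℕ) k)) :
    (deg (antitree 7 ![1, b, c, d, c, b, 1]) x : ℝ) = dg b c d x.1 := by
  have hx := x.1.2
  rw [at_deg]
  generalize (x.1 : ℕ) = k at hx ⊢
  interval_cases k <;> simp [Fin.sum_univ_seven, near, dg] <;> ring

lemma seven_lap (hb : 0 < b) (hc : 0 < c) (hd : 0 < d) (p : ℝ)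
    (x : Σ k : Fin 7, Fin ((![1, b, c, d, c, b, 1] : Fin 7 → ℕ) k)) :
    ∑ z, mu (antitree 7 ![1, b, c, d, c, b, 1]) p x z * ((z.1 : ℕ) : ℝ) =
      (x.1 : ℕ) + (1 - p) * lpl b c d x.1 := by
  have hb' : (1:ℝ) ≤ b := by exact_mod_cast hb
  have hc' : (1:ℝ) ≤ c := by exact_mod_cast hc
  have hd' : (1:ℝ) ≤ d := by exact_mod_cast hd
  have n1 : (b:ℝ) ≠ 0 := by positivity
  have n2 : (b:ℝ) + c ≠ 0 := by positivity
  have n3 : (b:ℝ) + c + d - 1 ≠ 0 := by linarith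
  have n4 : 2 * (c:ℝ) + d - 1 ≠ 0 := by linarith
  have hx := x.1.2
  rw [at_sum p x (fun j => ((j : ℕ) : ℝ)), seven_deg]
  generalize (x.1 : ℕ) = k at hx ⊢
  interval_cases k <;> simp [Fin.sum_univ_seven, near, dg, lpl] <;> field_simp <;> ring

lemma seven_conn (hb : 0 < b) (hc : 0 < c) (hd : 0 < d) :
    (antitree 7 ![1, b, c, d, c, b, 1]).Connected :=
  { preconnected := at_reach (seven_pos hb hc hd)
    nonempty := ⟨⟨0, ⟨0, seven_pos hb hc hd 0⟩⟩⟩ }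

lemma seven_diam (hb : 0 < b) (hc : 0 < c) (hd : 0 < d) :
    diam (antitree 7 ![1, b, c, d, c, b, 1]) = 6 := by
  have ha := seven_pos hb hc hd
  apply le_antisymm
  · refine Finset.sup_le ?_
    rintro ⟨x, y⟩ -
    have hx := x.1.2
    have hy := y.1.2
    rcases lt_trichotomy (x.1 : ℕ) y.1 with h | h | h
    · have := dist_lt ha x y h
      simp only; omega
    · by_cases hxy : x = y
      · subst hxy; simp
      · have : (antitree 7 ![1, b, c, d, c, b, 1]).Adj x y := ⟨hxy, Or.inl h⟩
        simp only [SimpleGraph.dist_eq_one_iff_adj.2 this]; omega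
    · have := dist_lt ha y x h
      rw [SimpleGraph.dist_comm] at this
      simp only; omega
  · have := dist_lt ha ⟨0, ⟨0, ha 0⟩⟩ ⟨6, ⟨0, ha 6⟩⟩ (by simp)
    have e6 : ((6 : Fin 7) : ℕ) = 6 := rfl
    simp only [Fin.val_zero, zero_add, e6] at this
    have h2 := Finset.le_sup (f := fun xy : (Σ k : Fin 7, Fin ((![1, b, c, d, c, b, 1] : Fin 7 → ℕ) k))
      × (Σ k : Fin 7, Fin ((![1, b, c, d, c, b, 1] : Fin 7 → ℕ) k)) =>
      (antitree 7 ![1, b, c, d, c, b, 1]).dist xy.1 xy.2)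
      (Finset.mem_univ (⟨0, ⟨0, ha 0⟩⟩, ⟨6, ⟨0, ha 6⟩⟩))
    simp only [this] at h2
    exact h2

lemma seven_le (hb : 0 < b) (hc : 0 < c) (hd : 0 < d)
    (x y : Σ k : Fin 7, Fin ((![1, b, c, d, c, b, 1] : Fin 7 → ℕ) k))
    (h : (x.1 : ℕ) + 1 = y.1) :
    kappaLLY (antitree 7 ![1, b, c, d, c, b, 1]) x y ≤ lpl b c d x.1 - lpl b c d y.1 := by
  have ha := seven_pos hb hc hd
  have hadj : (antitree 7 ![1, b, c, d, c, b, 1]).Adj x y :=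
    ⟨by rintro rfl; omega, Or.inr (Or.inl h)⟩
  refine kappaLLY_le (seven_conn hb hc hd) hadj _ fun p h0 h1 => ?_
  have := W1_ge_lip hadj p (by linarith) h1.le (fun z => ((z.1 : ℕ) : ℝ)) (by
    intro u v
    have := (dist_ge ha u v).1
    have : ((v.1 : ℕ) : ℝ) ≤ (u.1 : ℕ) + ((antitree 7 ![1, b, c, d, c, b, 1]).dist u v : ℝ) := by
      exact_mod_cast this
    linarith)
  rw [seven_lap hb hc hd, seven_lap hb hc hd, ← h] at this
  push_cast at this
  unfold kappa
  rw [← h]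
  linarith

lemma seven_ge_up (hb : 0 < b) (hc : 0 < c) (hd : 0 < d)
    (x y : Σ k : Fin 7, Fin ((![1, b, c, d, c, b, 1] : Fin 7 → ℕ) k))
    (h : (x.1 : ℕ) + 1 = y.1) (hdeg : dg b c d x.1 ≤ dg b c d y.1) :
    lpl b c d x.1 - lpl b c d y.1 ≤ kappaLLY (antitree 7 ![1, b, c, d, c, b, 1]) x y := by
  have ha := seven_pos hb hc hd
  have hadj : (antitree 7 ![1, b, c, d, c, b, 1]).Adj x y :=
    ⟨by rintro rfl; omega, Or.inr (Or.inl h)⟩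
  refine kappaLLY_ge (seven_conn hb hc hd) hadj _ fun p h0 h1 => ?_
  have := W1_upper hadj p h0 h1 (fun z => ((z.1 : ℕ) : ℝ))
    (by rw [← seven_deg, ← seven_deg] at hdeg; exact_mod_cast hdeg)
    (by rw [← h]; push_cast; ring)
    (by
      intro u v hu hv hvx hxv
      simp only [at_adj, near] at hu hv hxv
      have hu' : (u.1 : ℕ) ≤ x.1 + 1 := by
        rcases hu with rfl | hu <;> omega
      have hv' : (v.1 : ℕ) = x.1 + 2 := by
        have : ¬ ((x.1:ℕ) = v.1 ∨ (x.1:ℕ) + 1 = v.1 ∨ (v.1:ℕ) + 1 = x.1) :=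
          fun hh => hxv ⟨hvx.symm, hh⟩
        omega
      have := dist_lt ha u v (by omega)
      rw [← this]; push_cast; ring)
  rw [seven_lap hb hc hd, seven_lap hb hc hd, ← h] at this
  push_cast at this
  unfold kappa
  rw [← h]
  linarith

lemma seven_ge_down (hb : 0 < b) (hc : 0 < c) (hd : 0 < d)
    (x y : Σ k : Fin 7, Fin ((![1, b, c, d, c, b, 1] : Fin 7 → ℕ) k))
    (h : (y.1 : ℕ) + 1 = x.1) (hdeg : dg b c d x.1 ≤ dg b c d y.1) :
    lpl b c d y.1 - lpl b c d x.1 ≤ kappaLLY (antitree 7 ![1, b, c, d, c, b, 1]) x y := by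
  have ha := seven_pos hb hc hd
  have hadj : (antitree 7 ![1, b, c, d, c, b, 1]).Adj x y :=
    ⟨by rintro rfl; omega, Or.inr (Or.inr h)⟩
  refine kappaLLY_ge (seven_conn hb hc hd) hadj _ fun p h0 h1 => ?_
  have := W1_upper hadj p h0 h1 (fun z => -((z.1 : ℕ) : ℝ))
    (by rw [← seven_deg, ← seven_deg] at hdeg; exact_mod_cast hdeg)
    (by rw [← h]; push_cast; ring)
    (by
      intro u v hu hv hvx hxv
      simp only [at_adj, near] at hu hv hxv
      have hu' : (x.1 : ℕ) ≤ u.1 + 1 := by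
        rcases hu with rfl | hu <;> omega
      have hv' : (v.1 : ℕ) + 2 = x.1 := by
        have : ¬ ((x.1:ℕ) = v.1 ∨ (x.1:ℕ) + 1 = v.1 ∨ (v.1:ℕ) + 1 = x.1) :=
          fun hh => hxv ⟨hvx.symm, hh⟩
        omega
      have := dist_lt ha v u (by omega)
      rw [SimpleGraph.dist_comm] at this
      rw [← this]; push_cast; ring)
  simp only [mul_neg, Finset.sum_neg_distrib] at this
  rw [seven_lap hb hc hd, seven_lap hb hc hd, ← h] at this
  push_cast at this
  unfold kappa
  rw [← h]
  linarith

lemma seven_ge_same (hb : 0 < b) (hc : 0 < c) (hd : 0 < d)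
    (x y : Σ k : Fin 7, Fin ((![1, b, c, d, c, b, 1] : Fin 7 → ℕ) k)) (hne : x ≠ y)
    (h : (x.1 : ℕ) = y.1) :
    1 ≤ kappaLLY (antitree 7 ![1, b, c, d, c, b, 1]) x y := by
  have hadj : (antitree 7 ![1, b, c, d, c, b, 1]).Adj x y := ⟨hne, Or.inl h⟩
  refine kappaLLY_ge (seven_conn hb hc hd) hadj _ fun p h0 h1 => ?_
  have := W1_upper hadj p h0 h1 (fun z => if z = y then 1 else 0)
    (by
      have : (deg (antitree 7 ![1, b, c, d, c, b, 1]) x : ℝ)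
        ≤ deg (antitree 7 ![1, b, c, d, c, b, 1]) y := by rw [seven_deg, seven_deg, h]
      exact_mod_cast this)
    (by simp [hne])
    (by
      intro u v hu hv hvx hxv
      exfalso
      simp only [at_adj, near] at hv hxv
      exact hxv ⟨hvx.symm, by rw [h]; exact hv.2⟩)
  simp at this
  have h3 := mu_nonneg (antitree 7 ![1, b, c, d, c, b, 1]) p (by linarith) h1.le x y
  have h4 : mu (antitree 7 ![1, b, c, d, c, b, 1]) p y y = p := by simp [mu]
  unfold kappa
  linarith

end main

/-- The symmetrical antitree `AT(1,b,c,d,c,b,1)` is Bonnet-Myers sharp iff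
`c = 2b + 3` and `d = 3b + 1`. -/
theorem stmt13 (b c d : ℕ) (hb : 0 < b) (hc : 0 < c) (hd : 0 < d) :
    BMSharp (antitree 7 ![1, b, c, d, c, b, 1]) ↔ c = 2*b + 3 ∧ d = 3*b + 1 := by
  have ha := seven_pos hb hc hd
  have hb' : (1:ℝ) ≤ b := by exact_mod_cast hb
  have hc' : (1:ℝ) ≤ c := by exact_mod_cast hc
  have hd' : (1:ℝ) ≤ d := by exact_mod_cast hd
  have n2 : (0:ℝ) < (b:ℝ) + c := by positivity
  have n3 : (0:ℝ) < (b:ℝ) + c + d - 1 := by linarith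
  unfold BMSharp
  rw [seven_diam hb hc hd]
  constructor
  · intro hS
    have hbdd : BddBelow {r : ℝ | ∃ x y, (antitree 7 ![1, b, c, d, c, b, 1]).Adj x y ∧
        r = kappaLLY (antitree 7 ![1, b, c, d, c, b, 1]) x y} := by
      refine Set.Finite.bddBelow (Set.Finite.subset (Set.finite_range
        (fun xy : (Σ k : Fin 7, Fin ((![1, b, c, d, c, b, 1] : Fin 7 → ℕ) k))
          × (Σ k : Fin 7, Fin ((![1, b, c, d, c, b, 1] : Fin 7 → ℕ) k)) =>
          kappaLLY (antitree 7 ![1, b, c, d, c, b, 1]) xy.1 xy.2)) ?_)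
      rintro r ⟨x, y, -, rfl⟩
      exact ⟨(x, y), rfl⟩
    have key : ∀ x y : (Σ k : Fin 7, Fin ((![1, b, c, d, c, b, 1] : Fin 7 → ℕ) k)),
        (x.1 : ℕ) + 1 = y.1 → 1 / 3 ≤ lpl b c d x.1 - lpl b c d y.1 := by
      intro x y h
      refine le_trans ?_ (seven_le hb hc hd x y h)
      have : sInf _ ≤ kappaLLY (antitree 7 ![1, b, c, d, c, b, 1]) x y :=
        csInf_le hbdd ⟨x, y, ⟨by rintro rfl; omega, Or.inr (Or.inl h)⟩, rfl⟩
      rw [hS] at this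
      norm_num at this ⊢
      exact this
    have k1 := key ⟨0, ⟨0, ha 0⟩⟩ ⟨1, ⟨0, ha 1⟩⟩ (by simp)
    have k2 := key ⟨1, ⟨0, ha 1⟩⟩ ⟨2, ⟨0, ha 2⟩⟩ (by simp)
    have k3 := key ⟨2, ⟨0, ha 2⟩⟩ ⟨3, ⟨0, ha 3⟩⟩ (by simp)
    simp only [Fin.val_zero, Fin.val_one, Fin.val_two, lpl] at k1 k2 k3
    have e1 : ((3 : Fin 7) : ℕ) = 3 := rfl
    simp only [e1, lpl] at k3
    have A : ((c:ℝ) - 1) / (b + c) = 2 / 3 := by linarith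
    have B : ((d:ℝ) - b) / (b + c + d - 1) = 1 / 3 := by linarith
    rw [div_eq_div_iff n2.ne' (by norm_num)] at A
    rw [div_eq_div_iff n3.ne' (by norm_num)] at B
    have A' : (c:ℝ) = 2 * b + 3 := by linarith
    have B' : (d:ℝ) = 3 * b + 1 := by linarith
    exact ⟨by exact_mod_cast A', by exact_mod_cast B'⟩
  · rintro ⟨hc2, hd2⟩
    have A' : (c:ℝ) = 2 * b + 3 := by rw [hc2]; push_cast; ring
    have B' : (d:ℝ) = 3 * b + 1 := by rw [hd2]; push_cast; ring
    have A : ((c:ℝ) - 1) / (b + c) = 2 / 3 := by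
      rw [div_eq_div_iff n2.ne' (by norm_num)]; linarith
    have B : ((d:ℝ) - b) / (b + c + d - 1) = 1 / 3 := by
      rw [div_eq_div_iff n3.ne' (by norm_num)]; linarith
    have up : ∀ x y : (Σ k : Fin 7, Fin ((![1, b, c, d, c, b, 1] : Fin 7 → ℕ) k)),
        (x.1 : ℕ) + 1 = y.1 → 1 / 3 ≤ kappaLLY (antitree 7 ![1, b, c, d, c, b, 1]) x y := by
      intro x y h
      have hL : lpl b c d x.1 - lpl b c d y.1 = 1 / 3 := by
        have hy := y.1.2
        rw [← h] at hy ⊢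
        generalize (x.1 : ℕ) = k at hy ⊢
        have hk : k < 6 := by omega
        clear hy
        interval_cases k <;> simp only [lpl, A, B] <;> norm_num
      by_cases h3 : (x.1 : ℕ) < 3
      · rw [← hL]
        refine seven_ge_up hb hc hd x y h ?_
        rw [← h]
        generalize (x.1 : ℕ) = k at h3 ⊢
        interval_cases k <;> simp only [dg] <;> linarith
      · rw [← hL, kappaLLY_symm]
        refine seven_ge_down hb hc hd y x h ?_
        have hy := y.1.2
        rw [← h] at hy ⊢
        generalize (x.1 : ℕ) = k at h3 hy ⊢
        have hk : k < 6 := by omega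
        have h3' : 3 ≤ k := by omega
        clear hy h3
        interval_cases k <;> simp only [dg] <;> linarith
    have e26 : (2:ℝ) / ((6:ℕ) : ℝ) = 1 / 3 := by norm_num
    rw [e26]
    apply IsLeast.csInf_eq
    constructor
    · refine ⟨⟨0, ⟨0, ha 0⟩⟩, ⟨1, ⟨0, ha 1⟩⟩,
        ⟨fun h => absurd (congrArg (fun z => (z.1 : ℕ)) h) (by simp), Or.inr (Or.inl (by simp))⟩, ?_⟩
      refine le_antisymm (up _ _ (by simp)) ?_
      refine (seven_le hb hc hd _ _ (by simp)).trans ?_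
      simp only [Fin.val_zero, Fin.val_one, lpl, A]
      norm_num
    · rintro r ⟨x, y, hadj, rfl⟩
      rcases hadj.2 with h | h | h
      · exact le_trans (by norm_num) (seven_ge_same hb hc hd x y hadj.1 h)
      · exact up x y h
      · rw [kappaLLY_symm]; exact up y x h
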